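/- Let n ≥ 1, let K = ℂ(x_1,…,x_n), and let f, g ∈ ℂ[x_1,…,x_n] be polynomials of degree at most one with g ≠ 0 such that the rational function f/g is not constant. Then f/g is not a square in K, and the quadratic field extension K' = K[z]/(z² − f/g) is isomorphic, as a field extension of ℂ, to the purely transcendental field ℂ(y_1,…,y_n) of transcendence degree n. -/

import Mathlib

/-!
Write `K = ℂ(x₁,…,xₙ)`, `α = f/g`.

`α` is not a square: if `α = (p/q)²` with `p, q` coprime, then `p² g = q² f` gives `p² ∣ f` and
`q² ∣ g`, so `p` and `q` are constant because `f` and `g` have degree at most one, and `α` would be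
constant (`not_isSquare_linear_quotient`).

`K' = K(z)`, `z² = α`, is rational: write `f = a₀ + ∑ aⱼ xⱼ`, `g = b₀ + ∑ bⱼ xⱼ`. Some variable `xᵢ`
occurs in `f` or `g`, and the relation `f = z² g` is linear in `xᵢ` with leading coefficient
`aᵢ - z² bᵢ`, which is nonzero because `α` is not constant. Hence `xᵢ` is a rational function of `z`
and the other `xⱼ`, so the `n` elements obtained from `x₁,…,xₙ` by replacing `xᵢ` with `z` generate
`K'` over `ℂ` (`adjoin_update_eq_top`). As `K'` is algebraic over `K`, it has transcendence degree
`n`, and `n` elements generating it are algebraically independent (`nonempty_algEquiv_ratFF`).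
-/

noncomputable section

/-- The rational function field `ℂ(x₁,…,xₙ)`. -/
abbrev RatFF (n : ℕ) : Type := FractionRing (MvPolynomial (Fin n) ℂ)

open MvPolynomial

lemma eq_const_add_linear {n : ℕ} (f : MvPolynomial (Fin n) ℂ) (hf : f.totalDegree ≤ 1) :
    f = C (f.coeff 0) + ∑ j, C (f.coeff (Finsupp.single j 1)) * X j := by
  ext m
  have hC : ∀ j : Fin n, (0 : Fin n →₀ ℕ) ≠ Finsupp.single j 1 := fun j h => by
    simpa using DFunLike.congr_fun h j
  simp only [coeff_add, coeff_C, coeff_sum, coeff_C_mul, coeff_X]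
  by_cases h0 : m = 0
  · subst h0
    simp
  by_cases h1 : ∃ i, m = Finsupp.single i 1
  · obtain ⟨i, rfl⟩ := h1
    rw [if_neg (hC i), Finset.sum_eq_single i]
    · simp
    · intro j _ hj
      rw [if_neg, mul_zero]
      intro h
      exact hj (Finsupp.single_left_injective one_ne_zero h)
    · simp
  · rw [if_neg (Ne.symm h0), Finset.sum_eq_zero, add_zero]
    · apply coeff_eq_zero_of_totalDegree_lt
      refine lt_of_le_of_lt hf ?_
      by_contra! hle
      obtain ⟨i, hi⟩ : ∃ i, m i ≠ 0 := by
        by_contra! h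
        exact h0 (Finsupp.ext h)
      have hi' : i ∈ m.support := Finsupp.mem_support_iff.mpr hi
      have hsum := Finset.add_sum_erase m.support m hi'
      apply h1
      refine ⟨i, Finsupp.ext fun j => ?_⟩
      by_cases hj : j = i
      · subst hj
        rw [Finsupp.single_eq_same]
        omega
      · rw [Finsupp.single_eq_of_ne hj]
        by_contra hmj
        have := Finset.single_le_sum (f := m) (fun _ _ => Nat.zero_le _)
          (Finset.mem_erase.mpr ⟨hj, Finsupp.mem_support_iff.mpr hmj⟩)
        omega
    · intro j _
      rw [if_neg, mul_zero]
      exact fun h => h1 ⟨j, h.symm⟩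

lemma eq_C_of_sq_dvd {n : ℕ} {p f : MvPolynomial (Fin n) ℂ} (hf : f.totalDegree ≤ 1)
    (hf0 : f ≠ 0) (h : p ^ 2 ∣ f) : ∃ c : ℂ, p = C c := by
  obtain ⟨r, rfl⟩ := h
  have hp : p ≠ 0 := by rintro rfl; simp at hf0
  have hr : r ≠ 0 := by rintro rfl; simp at hf0
  rw [pow_two, totalDegree_mul_of_isDomain (mul_ne_zero hp hp) hr,
    totalDegree_mul_of_isDomain hp hp] at hf
  exact ⟨_, totalDegree_eq_zero_iff_eq_C.mp (by omega)⟩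

lemma not_isSquare_linear_quotient {n : ℕ} {f g : MvPolynomial (Fin n) ℂ}
    (hf : f.totalDegree ≤ 1) (hg : g.totalDegree ≤ 1) (hg0 : g ≠ 0)
    (hnonconst : ∀ c : ℂ, f ≠ c • g) (β : RatFF n) :
    β ^ 2 ≠ algebraMap (MvPolynomial (Fin n) ℂ) (RatFF n) f /
            algebraMap (MvPolynomial (Fin n) ℂ) (RatFF n) g := by
  intro h
  have hf0 : f ≠ 0 := fun h0 => hnonconst 0 (by simp [h0])
  have hinj := IsFractionRing.injective (MvPolynomial (Fin n) ℂ) (RatFF n)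
  set p := IsFractionRing.num (MvPolynomial (Fin n) ℂ) β
  set q : MvPolynomial (Fin n) ℂ := (IsFractionRing.den (MvPolynomial (Fin n) ℂ) β).1
  have hpq : IsRelPrime p q := IsFractionRing.num_den_reduced _ β
  have hq0 : q ≠ 0 := nonZeroDivisors.coe_ne_zero _
  have hβ : algebraMap _ (RatFF n) p / algebraMap _ (RatFF n) q = β :=
    IsFractionRing.mk'_num_den' _ β
  have hgK : algebraMap _ (RatFF n) g ≠ 0 := by
    rwa [Ne, map_eq_zero_iff _ hinj]
  have hqK : algebraMap _ (RatFF n) q ≠ 0 := by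
    rwa [Ne, map_eq_zero_iff _ hinj]
  have key : p ^ 2 * g = q ^ 2 * f := by
    apply hinj
    rw [← hβ, div_pow, div_eq_div_iff (pow_ne_zero 2 hqK) hgK] at h
    simp only [map_mul, map_pow]
    rw [h, mul_comm]
  have hpq2 : IsRelPrime (p ^ 2) (q ^ 2) := hpq.pow
  obtain ⟨c, hc⟩ := eq_C_of_sq_dvd hf hf0 (hpq2.dvd_of_dvd_mul_left ⟨g, key.symm⟩)
  obtain ⟨d, hd⟩ := eq_C_of_sq_dvd hg hg0 (hpq2.symm.dvd_of_dvd_mul_left ⟨f, key⟩)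
  have hd0 : d ≠ 0 := by
    rintro rfl
    exact hq0 (by simpa using hd)
  apply hnonconst (c ^ 2 / d ^ 2)
  apply mul_left_cancel₀ (pow_ne_zero 2 hq0)
  rw [← key, hc, hd, smul_eq_C_mul, ← mul_assoc, ← map_pow, ← map_pow, ← map_mul,
    mul_div_cancel₀ _ (pow_ne_zero 2 hd0)]

/-- Two polynomials of degree at most one, not proportional, involve at least one variable. -/
lemma exists_coeff_ne_zero {n : ℕ} {f g : MvPolynomial (Fin n) ℂ}
    (hf : f.totalDegree ≤ 1) (hg : g.totalDegree ≤ 1) (hg0 : g ≠ 0)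
    (hnonconst : ∀ c : ℂ, f ≠ c • g) :
    ∃ i, ¬ (f.coeff (Finsupp.single i 1) = 0 ∧ g.coeff (Finsupp.single i 1) = 0) := by
  by_contra! h
  have hf' := eq_const_add_linear f hf
  have hg' := eq_const_add_linear g hg
  simp only [(h _).1, (h _).2, map_zero, zero_mul, Finset.sum_const_zero, add_zero] at hf' hg'
  have hc : g.coeff 0 ≠ 0 := fun h0 => hg0 (by rw [hg', h0, map_zero])
  apply hnonconst (f.coeff 0 / g.coeff 0)
  calc f = C (f.coeff 0) := hf'
    _ = (f.coeff 0 / g.coeff 0) • C (g.coeff 0) := by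
      rw [smul_eq_C_mul, ← map_mul, div_mul_cancel₀ _ hc]
    _ = (f.coeff 0 / g.coeff 0) • g := by rw [← hg']

/-- If `z` with `z² = f/g` generates `L` over `ℂ(x₁,…,xₙ)`, then `n` elements generate `L` as a
field over `ℂ`, namely `z` and all but one of the variables: `f = z² g` is solved for a variable
occurring in it. -/
lemma adjoin_update_eq_top {n : ℕ} {f g : MvPolynomial (Fin n) ℂ}
    (hf : f.totalDegree ≤ 1) (hg : g.totalDegree ≤ 1) (hg0 : g ≠ 0)
    (hnonconst : ∀ c : ℂ, f ≠ c • g)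
    {L : Type} [Field L] [Algebra ℂ L] [Algebra (RatFF n) L] [IsScalarTower ℂ (RatFF n) L]
    (z : L) (hz : z ^ 2 = algebraMap (RatFF n) L
      (algebraMap (MvPolynomial (Fin n) ℂ) (RatFF n) f /
        algebraMap (MvPolynomial (Fin n) ℂ) (RatFF n) g))
    (htop : Algebra.adjoin (RatFF n) {z} = ⊤) :
    ∃ y : Fin n → L, IntermediateField.adjoin ℂ (Set.range y) = ⊤ := by
  obtain ⟨i, hi⟩ := exists_coeff_ne_zero hf hg hg0 hnonconst
  let φ : MvPolynomial (Fin n) ℂ →ₐ[ℂ] L :=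
    (IsScalarTower.toAlgHom ℂ (RatFF n) L).comp
      (IsScalarTower.toAlgHom ℂ (MvPolynomial (Fin n) ℂ) (RatFF n))
  have hφ : ∀ p, φ p = algebraMap (RatFF n) L (algebraMap _ (RatFF n) p) := fun _ => rfl
  have hφinj : Function.Injective φ :=
    (algebraMap (RatFF n) L).injective.comp
      (IsFractionRing.injective (MvPolynomial (Fin n) ℂ) (RatFF n))
  have hφC : ∀ c, φ (C c) = algebraMap ℂ L c := fun c => φ.commutes c
  have hφg : φ g ≠ 0 := by rwa [Ne, map_eq_zero_iff _ hφinj]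
  have hrel : φ f = z ^ 2 * φ g := by
    rw [hz, map_div₀, ← hφ, ← hφ, div_mul_cancel₀ _ hφg]
  set a := f.coeff (Finsupp.single i 1) with ha
  set b := g.coeff (Finsupp.single i 1) with hb
  -- the coefficient of `xᵢ` in `f - z² g`; its vanishing would make `f` and `g` proportional
  have hlead : algebraMap ℂ L a - z ^ 2 * algebraMap ℂ L b ≠ 0 := by
    intro h0
    have h1 : a • g = b • f := by
      apply hφinj
      rw [smul_eq_C_mul, smul_eq_C_mul, map_mul, map_mul, hφC, hφC, hrel, sub_eq_zero.mp h0]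
      ring
    by_cases hb0 : b = 0
    · rw [hb0, zero_smul, smul_eq_zero] at h1
      exact hi ⟨h1.resolve_right hg0, hb0⟩
    · apply hnonconst (a / b)
      rw [div_eq_inv_mul, mul_smul, h1, smul_smul, inv_mul_cancel₀ hb0, one_smul]
  refine ⟨Function.update (fun j => φ (X j)) i z, ?_⟩
  set M := IntermediateField.adjoin ℂ
    (Set.range (Function.update (fun j => φ (X j)) i z)) with hM
  have hzM : z ∈ M := IntermediateField.subset_adjoin _ _ ⟨i, by simp⟩
  have hne : ∀ j, j ≠ i → φ (X j) ∈ M := fun j hj =>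
    IntermediateField.subset_adjoin _ _ ⟨j, by simp [hj]⟩
  have hsplit : ∀ p : MvPolynomial (Fin n) ℂ, p.totalDegree ≤ 1 → ∃ r ∈ M,
      φ p = algebraMap ℂ L (p.coeff (Finsupp.single i 1)) * φ (X i) + r := by
    intro p hp
    refine ⟨algebraMap ℂ L (p.coeff 0) + ∑ j ∈ Finset.univ.erase i,
      algebraMap ℂ L (p.coeff (Finsupp.single j 1)) * φ (X j), ?_, ?_⟩
    · refine add_mem (M.algebraMap_mem _) (sum_mem fun j hj => mul_mem (M.algebraMap_mem _) ?_)
      exact hne j (Finset.ne_of_mem_erase hj)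
    · conv_lhs => rw [eq_const_add_linear p hp]
      rw [map_add, map_sum, ← Finset.add_sum_erase _ _ (Finset.mem_univ i)]
      simp only [map_mul, hφC]
      ring
  obtain ⟨r, hr, hfr⟩ := hsplit f hf
  obtain ⟨s, hs, hgs⟩ := hsplit g hg
  have hXi : φ (X i) = (z ^ 2 * s - r) / (algebraMap ℂ L a - z ^ 2 * algebraMap ℂ L b) := by
    rw [eq_div_iff hlead]
    rw [hfr, hgs] at hrel
    linear_combination hrel
  have hX : ∀ j, φ (X j) ∈ M := by
    intro j
    by_cases hj : j = i
    · subst hj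
      rw [hXi]
      exact div_mem (sub_mem (mul_mem (pow_mem hzM 2) hs) hr)
        (sub_mem (M.algebraMap_mem _) (mul_mem (pow_mem hzM 2) (M.algebraMap_mem _)))
    · exact hne j hj
  have hpoly : ∀ p, φ p ∈ M := by
    intro p
    induction p using MvPolynomial.induction_on with
    | C c => rw [hφC]; exact M.algebraMap_mem c
    | add p q hp hq => rw [map_add]; exact add_mem hp hq
    | mul_X p j hp => rw [map_mul]; exact mul_mem hp (hX j)
  have hK : ∀ k : RatFF n, algebraMap (RatFF n) L k ∈ M := by
    intro k
    obtain ⟨p, q, -, rfl⟩ := IsFractionRing.div_surjective (A := MvPolynomial (Fin n) ℂ) k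
    rw [map_div₀]
    exact div_mem (hpoly p) (hpoly q)
  rw [eq_top_iff]
  intro x _
  have hx : x ∈ Algebra.adjoin (RatFF n) {z} := htop ▸ Algebra.mem_top
  induction hx using Algebra.adjoin_induction with
  | mem x hx => rw [Set.mem_singleton_iff.mp hx]; exact hzM
  | algebraMap k => exact hK k
  | add x y _ _ hx hy => exact add_mem (hx trivial) (hy trivial)
  | mul x y _ _ hx hy => exact mul_mem (hx trivial) (hy trivial)

/-- An algebraic extension of `ℂ(x₁,…,xₙ)` has transcendence degree `n` over `ℂ`; if `n` elements
generate it as a field, they are therefore algebraically independent. -/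
lemma nonempty_algEquiv_ratFF {n : ℕ}
    {L : Type} [Field L] [Algebra ℂ L] [Algebra (RatFF n) L] [IsScalarTower ℂ (RatFF n) L]
    [Algebra.IsAlgebraic (RatFF n) L] (y : Fin n → L)
    (hy : IntermediateField.adjoin ℂ (Set.range y) = ⊤) :
    Nonempty (L ≃ₐ[ℂ] RatFF n) := by
  have h1 : IsTranscendenceBasis ℂ (X : Fin n → MvPolynomial (Fin n) ℂ) :=
    .mvPolynomial _ _
  have : Algebra.IsAlgebraic (MvPolynomial (Fin n) ℂ) (RatFF n) :=
    IsLocalization.isAlgebraic (RatFF n) (nonZeroDivisors (MvPolynomial (Fin n) ℂ))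
  have h2 := (h1.algebraMap_comp (A := RatFF n)).algebraMap_comp (A := L)
  have hcard := h2.cardinalMk_eq_trdeg
  have : Algebra.IsAlgebraic (Algebra.adjoin ℂ (Set.range y)) L := by
    constructor
    intro x
    have hx : x ∈ IntermediateField.adjoin ℂ (Set.range y) := hy ▸ IntermediateField.mem_top
    obtain ⟨r, hr, s, hs, rfl⟩ := IntermediateField.mem_adjoin_iff_div.mp hx
    rw [div_eq_mul_inv]
    exact (isAlgebraic_algebraMap (⟨r, hr⟩ : Algebra.adjoin ℂ (Set.range y))).mul
      (isAlgebraic_algebraMap (⟨s, hs⟩ : Algebra.adjoin ℂ (Set.range y))).inv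
  have hyb : IsTranscendenceBasis ℂ y :=
    Algebra.IsAlgebraic.isTranscendenceBasis_of_le_trdeg_of_finite ℂ y hcard.le
  exact ⟨(hyb.1.aevalEquivField.trans
    ((IntermediateField.equivOfEq hy).trans IntermediateField.topEquiv)).symm⟩

/-- Key step in the unirationality criterion: for `K = ℂ(x₁,…,xₙ)` and polynomials
`f, g ∈ ℂ[x₁,…,xₙ]` of degree at most one with `g ≠ 0` such that `f/g` is not constant,
the element `f/g` is not a square in `K`, and the quadratic extension
`K' = K[z]/(z² - f/g)` is isomorphic, as a field extension of `ℂ`, to the purely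
transcendental field `ℂ(y₁,…,yₙ)` of transcendence degree `n`. -/
theorem quadratic_extension_by_root_of_linear_quotient_is_rational
    (n : ℕ) (hn : 1 ≤ n) (f g : MvPolynomial (Fin n) ℂ)
    (hf : f.totalDegree ≤ 1) (hg : g.totalDegree ≤ 1) (hg0 : g ≠ 0)
    (hnonconst : ∀ c : ℂ, f ≠ c • g)
    (α : RatFF n)
    (hα : α = algebraMap (MvPolynomial (Fin n) ℂ) (RatFF n) f /
            algebraMap (MvPolynomial (Fin n) ℂ) (RatFF n) g) :
    (¬ ∃ β : RatFF n, β ^ 2 = α) ∧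
      Nonempty (AdjoinRoot (Polynomial.X ^ 2 - Polynomial.C α) ≃ₐ[ℂ] RatFF n) := by
  have hns : ∀ β : RatFF n, β ^ 2 ≠ α := fun β =>
    hα ▸ not_isSquare_linear_quotient hf hg hg0 hnonconst β
  refine ⟨fun ⟨β, hβ⟩ => hns β hβ, ?_⟩
  have hirr := X_pow_sub_C_irreducible_of_prime Nat.prime_two hns
  have : Fact (Irreducible (Polynomial.X ^ 2 - Polynomial.C α)) := ⟨hirr⟩
  have : Module.Finite (RatFF n) (AdjoinRoot (Polynomial.X ^ 2 - Polynomial.C α)) :=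
    (AdjoinRoot.powerBasis hirr.ne_zero).finite
  have hz : AdjoinRoot.root (Polynomial.X ^ 2 - Polynomial.C α) ^ 2 =
      algebraMap (RatFF n) (AdjoinRoot (Polynomial.X ^ 2 - Polynomial.C α)) α := by
    have h := AdjoinRoot.eval₂_root (Polynomial.X ^ 2 - Polynomial.C α)
    rw [Polynomial.eval₂_sub, Polynomial.eval₂_pow, Polynomial.eval₂_X, Polynomial.eval₂_C,
      sub_eq_zero] at h
    exact h
  subst hα
  obtain ⟨y, hy⟩ := adjoin_update_eq_top hf hg hg0 hnonconst _ hz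
    AdjoinRoot.adjoinRoot_eq_top
  exact nonempty_algEquiv_ratFF y hy
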